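/- (Unit Fidelity, matrix form of Theorem 1.) Let n : ℕ and let l : List (Fin n → Fin 4) be a duplicate-free list containing every function a : Fin n → Fin 4 (so l enumerates all 4^n Pauli strings). Then for every complex matrix E indexed by (Fin n → Fin 2), l.foldl (fun M a => (P_a * M * P_a + M)/2) E = ((trace E)/2^n) • 1. That is, applying one layer of Pauli check sandwiching for every Pauli string reduces every Kraus operator to a scalar multiple of the identity. -/

import Mathlib

open Matrix Complex Kronecker

noncomputable def pauli : Fin 4 → Matrix (Fin 2) (Fin 2) ℂ
  | 0 => !![1, 0; 0, 1]
  | 1 => !![0, 1; 1, 0]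
  | 2 => !![0, -Complex.I; Complex.I, 0]
  | 3 => !![1, 0; 0, -1]

noncomputable def PauliString {n : ℕ} (a : Fin n → Fin 4) :
    Matrix (Fin n → Fin 2) (Fin n → Fin 2) ℂ :=
  Matrix.of fun f g => ∏ i, pauli (a i) (f i) (g i)

theorem pauli_swap (x y : Fin 4) : ∃ s : ℂ, s * s = 1 ∧
    ∀ u v, (pauli x * pauli y) u v = s * (pauli y * pauli x) u v := by
  by_cases h : x = 0 ∨ y = 0 ∨ x = y
  · refine ⟨1, by norm_num, ?_⟩
    intro u v
    fin_cases x <;> fin_cases y <;> simp at h <;> fin_cases u <;> fin_cases v <;>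
      simp [pauli, Matrix.mul_apply, Fin.sum_univ_two]
  · refine ⟨-1, by norm_num, ?_⟩
    intro u v
    fin_cases x <;> fin_cases y <;> simp at h <;> fin_cases u <;> fin_cases v <;>
      simp [pauli, Matrix.mul_apply, Fin.sum_univ_two]

theorem pauli_sq (x : Fin 4) : pauli x * pauli x = 1 := by
  ext u v
  fin_cases x <;> fin_cases u <;> fin_cases v <;>
    simp [pauli, Matrix.mul_apply, Fin.sum_univ_two]

theorem PauliString_mul {n : ℕ} (a b : Fin n → Fin 4) (f g : Fin n → Fin 2) :
    (PauliString a * PauliString b) f g = ∏ i, (pauli (a i) * pauli (b i)) (f i) (g i) := by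
  simp only [Matrix.mul_apply, PauliString, Matrix.of_apply, Finset.prod_univ_sum,
    Fintype.piFinset_univ, Finset.prod_mul_distrib]

theorem PauliString_sq {n : ℕ} (a : Fin n → Fin 4) : PauliString a * PauliString a = 1 := by
  ext f g
  rw [PauliString_mul]
  simp only [pauli_sq, Matrix.one_apply]
  by_cases h : f = g
  · simp [h]
  · obtain ⟨i, hi⟩ := Function.ne_iff.mp h
    rw [if_neg h]
    exact Finset.prod_eq_zero (Finset.mem_univ i) (if_neg hi)

theorem PauliString_swap {n : ℕ} (a b : Fin n → Fin 4) : ∃ c : ℂ, c * c = 1 ∧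
    PauliString a * PauliString b = c • (PauliString b * PauliString a) := by
  choose s hs hsw using fun i => pauli_swap (a i) (b i)
  refine ⟨∏ i, s i, ?_, ?_⟩
  · rw [← Finset.prod_mul_distrib]; simp [hs]
  · ext f g
    rw [Matrix.smul_apply, PauliString_mul, PauliString_mul, smul_eq_mul,
      ← Finset.prod_mul_distrib]
    exact Finset.prod_congr rfl fun i _ => hsw i _ _

noncomputable def checkStep {n : ℕ} (M : Matrix (Fin n → Fin 2) (Fin n → Fin 2) ℂ)
    (a : Fin n → Fin 4) : Matrix (Fin n → Fin 2) (Fin n → Fin 2) ℂ :=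
  ((1 : ℂ) / 2) • (PauliString a * M * PauliString a + M)

theorem checkStep_self {n : ℕ} (M : Matrix (Fin n → Fin 2) (Fin n → Fin 2) ℂ)
    (a : Fin n → Fin 4) : Commute (PauliString a) (checkStep M a) := by
  unfold checkStep
  apply Commute.smul_right
  have h := PauliString_sq a
  unfold Commute SemiconjBy
  rw [mul_add, add_mul, mul_assoc (PauliString a * M), h, mul_assoc (PauliString a) M,
    ← mul_assoc (PauliString a) (PauliString a), h, one_mul, mul_one, add_comm]

theorem checkStep_preserve {n : ℕ} (M : Matrix (Fin n → Fin 2) (Fin n → Fin 2) ℂ)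
    (a b : Fin n → Fin 4) (hM : Commute (PauliString a) M) :
    Commute (PauliString a) (checkStep M b) := by
  unfold checkStep
  apply Commute.smul_right
  refine Commute.add_right ?_ hM
  obtain ⟨c, hc, hab⟩ := PauliString_swap a b
  have hba : PauliString b * PauliString a = c • (PauliString a * PauliString b) := by
    rw [hab, smul_smul, hc, one_smul]
  unfold Commute SemiconjBy
  calc PauliString a * (PauliString b * M * PauliString b)
      = (PauliString a * PauliString b) * M * PauliString b := by simp only [mul_assoc]
    _ = c • (PauliString b * (PauliString a * M) * PauliString b) := by
        rw [hab]; simp only [mul_assoc, smul_mul_assoc]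
    _ = PauliString b * M * (c • (PauliString a * PauliString b)) := by
        rw [hM.eq]; simp only [mul_assoc, mul_smul_comm]
    _ = PauliString b * M * PauliString b * PauliString a := by
        rw [← hba]; simp only [mul_assoc]

theorem checkStep_trace {n : ℕ} (M : Matrix (Fin n → Fin 2) (Fin n → Fin 2) ℂ)
    (a : Fin n → Fin 4) : (checkStep M a).trace = M.trace := by
  unfold checkStep
  rw [Matrix.trace_smul, Matrix.trace_add, Matrix.trace_mul_comm, ← mul_assoc,
    PauliString_sq, one_mul, smul_eq_mul]
  ring

theorem foldl_preserve {n : ℕ} (l : List (Fin n → Fin 4)) (a : Fin n → Fin 4) :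
    ∀ M, Commute (PauliString a) M → Commute (PauliString a) (l.foldl checkStep M) := by
  induction l with
  | nil => intro M h; exact h
  | cons b l ih => intro M h; exact ih _ (checkStep_preserve M a b h)

theorem foldl_commute {n : ℕ} (l : List (Fin n → Fin 4)) (a : Fin n → Fin 4) (ha : a ∈ l) :
    ∀ M, Commute (PauliString a) (l.foldl checkStep M) := by
  induction l with
  | nil => simp at ha
  | cons b l ih =>
    intro M
    rcases List.mem_cons.mp ha with rfl | h
    · exact foldl_preserve l a _ (checkStep_self M a)
    · exact ih h _

theorem foldl_trace {n : ℕ} (l : List (Fin n → Fin 4)) :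
    ∀ M, (l.foldl checkStep M).trace = M.trace := by
  induction l with
  | nil => intro M; rfl
  | cons b l ih => intro M; exact (ih _).trans (checkStep_trace M b)

theorem scalar_of_commute {n : ℕ} (F : Matrix (Fin n → Fin 2) (Fin n → Fin 2) ℂ)
    (h : ∀ a, Commute (PauliString a) F) :
    F = (F.trace / (2 : ℂ) ^ n) • (1 : Matrix (Fin n → Fin 2) (Fin n → Fin 2) ℂ) := by
  have hoff : ∀ f g, f ≠ g → F f g = 0 := by
    intro f g hfg
    obtain ⟨i, hi⟩ := Function.ne_iff.mp hfg
    let a : Fin n → Fin 4 := fun j => if j = i then 3 else 0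
    have hz : ∀ k m, k ≠ m → PauliString a k m = 0 := by
      intro k m hkm
      obtain ⟨j, hj⟩ := Function.ne_iff.mp hkm
      refine Finset.prod_eq_zero (Finset.mem_univ j) ?_
      by_cases hji : j = i
      · simp only [a, if_pos hji]
        generalize k j = x at *
        generalize m j = y at *
        fin_cases x <;> fin_cases y <;> simp [pauli] at hj ⊢
      · simp only [a, if_neg hji]
        generalize k j = x at *
        generalize m j = y at *
        fin_cases x <;> fin_cases y <;> simp [pauli] at hj ⊢
    have hd : ∀ k, PauliString a k k = pauli 3 (k i) (k i) := by
      intro k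
      rw [PauliString, Matrix.of_apply]
      refine (Finset.prod_eq_single i ?_ ?_).trans ?_
      · intro j _ hji
        simp only [a, if_neg hji]
        generalize k j = x
        fin_cases x <;> simp [pauli]
      · simp
      · simp [a]
    have e := congrFun (congrFun (h a).eq f) g
    rw [Matrix.mul_apply, Matrix.mul_apply,
      Finset.sum_eq_single f (fun k _ hk => by rw [hz f k hk.symm, zero_mul]) (by simp),
      Finset.sum_eq_single g (fun k _ hk => by rw [hz k g hk, mul_zero]) (by simp),
      hd, hd] at e
    generalize f i = x at *
    generalize g i = y at *
    fin_cases x <;> fin_cases y <;> simp [pauli] at hi e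
    · exact self_eq_neg.mp e
    · exact neg_eq_self.mp e
  have hdiag : ∀ f g, F f f = F g g := by
    intro f g
    let a : Fin n → Fin 4 := fun j => if f j = g j then 0 else 1
    have hp : PauliString a f g = 1 := by
      rw [PauliString, Matrix.of_apply]
      refine Finset.prod_eq_one fun j _ => ?_
      simp only [a]
      generalize f j = x
      generalize g j = y
      fin_cases x <;> fin_cases y <;> simp [pauli]
    have e := congrFun (congrFun (h a).eq f) g
    rw [Matrix.mul_apply, Matrix.mul_apply,
      Finset.sum_eq_single g (fun k _ hk => by rw [hoff k g hk, mul_zero]) (by simp),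
      Finset.sum_eq_single f (fun k _ hk => by rw [hoff f k hk.symm, zero_mul]) (by simp),
      hp, one_mul, mul_one] at e
    exact e.symm
  ext f g
  rw [Matrix.smul_apply, Matrix.one_apply]
  by_cases hfg : f = g
  · subst hfg
    have ht : F.trace = 2 ^ n * F f f := by
      simp only [Matrix.trace, Matrix.diag_apply, hdiag _ f]
      simp
    rw [ht, if_pos rfl]
    simp
  · rw [hoff f g hfg, if_neg hfg, smul_zero]

theorem all_checks_reduce_to_identity (n : ℕ) (l : List (Fin n → Fin 4))
    (hnd : l.Nodup) (hmem : ∀ a : Fin n → Fin 4, a ∈ l)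
    (E : Matrix (Fin n → Fin 2) (Fin n → Fin 2) ℂ) :
    l.foldl (fun M a => ((1 : ℂ) / 2) • (PauliString a * M * PauliString a + M)) E =
      (Matrix.trace E / (2 : ℂ) ^ n) • (1 : Matrix (Fin n → Fin 2) (Fin n → Fin 2) ℂ) := by
  have h := scalar_of_commute (l.foldl checkStep E) fun a => foldl_commute l a (hmem a) E
  rw [foldl_trace] at h
  exact h
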